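/- Let a ≥ 2 be an integer and let X ⊆ [0,1] be an infinite closed minimal T_a-invariant set. If f : ℝ → ℝ is a real-analytic embedding (real-analytic with nowhere vanishing derivative) and f(X) ⊆ X, then f is affine, i.e. f(x) = rx + t with log_a|r| ∈ ℚ. -/

import Mathlib

/-!
The argument studies `X` at small scales. A micro-configuration at `x ∈ X` is a limit of tuples of
points of `X` near `x`, rescaled by powers of `a` (`Micro`). Since `T_a` is locally affine with
slope `a` on `X` and `X` is minimal, the set of micro-configurations is the same at all points of
`X` (`micro_const`). A map `f` preserving `X` acts on it by multiplication by `f' x`, for every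
`x ∈ X` (`micro_deriv`).

The set `Stab` of exponents `s` for which dilation by `a ^ s` preserves micro-configurations is a
closed additive submonoid of `ℝ` containing `±1` and `2 * log_a |f' x|`, `x ∈ X`. So it is either
`ℝ` or contained in `(1/m)ℤ` for some `m ≠ 0` (`stab_dichotomy`). In the second case `log_a |f'|`
is locally constant on `X`; as `X` has an accumulation point, the analytic function `f'` is
constant, and `f` is affine with `log_a |f'|` rational.

It remains to exclude that, for every size of configuration, all dilations are allowed
(`exists_stab_ne_univ`). Every micro-configuration has a translate contained in `X` modulo `1`, up
to a small error (`micro_realize`), and `X` omits a neighbourhood of `0` in the circle (`gap`).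

* Micro-configurations have a bounded number of distinct points (`bounded_config`): given many real
  points, some of them form a lacunary set, which one dilation spreads almost evenly around the
  circle (`lacunary_targets`, an elementary real analogue of a theorem of Glasner); every translate
  of the dilated set then enters the gap.
* Hence long words of the base-`a` expansions in `X` have boundedly many extensions of any fixed
  length, and the number of words grows subexponentially (`words_bound`, `words_growth`).
* There is a micro-configuration of two distinct points, and all its dilations occur; so `X - X`
  is dense in the circle, and the number of words of length `n` is at least of order `a ^ (n / 2)`
  (`words_lower`). This contradicts subexponential growth.
-/

open Filter Topology Set MeasureTheory ENNReal

/-- `T_a x = a x mod 1` on `[0,1]`. -/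
noncomputable def Ta (a : ℕ) (x : ℝ) : ℝ := Int.fract (a * x)

/-- `T_a` on the circle `ℝ/ℤ`. -/
noncomputable def TaC (a : ℕ) (x : AddCircle (1:ℝ)) : AddCircle (1:ℝ) := a • x

/-- the `a`-adic fractional part `{s}_a = -log_a |s| mod 1`, as an element of `ℝ/ℤ`. -/
noncomputable def fracPart (a : ℕ) (s : ℝ) : AddCircle (1:ℝ) :=
  ((-Real.logb a |s| : ℝ) : AddCircle (1:ℝ))

/-- the `a`-adic local difference set `F_{a,X}(x)` of `X ⊆ ℝ` at `x`. -/
def localDiffSet (a : ℕ) (X : Set ℝ) (x : ℝ) : Set (AddCircle (1:ℝ)) :=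
  { t | ∃ u v : ℕ → ℝ,
      (∀ n, u n ∈ X) ∧ (∀ n, v n ∈ X) ∧ (∀ n, u n ≠ v n) ∧
      Tendsto u atTop (nhds x) ∧ Tendsto v atTop (nhds x) ∧
      Tendsto (fun n => fracPart a (u n - v n)) atTop (nhds t) }

/-- `F_{a,X}(X) = ⋃_{x ∈ X} F_{a,X}(x)`. -/
def localDiffSetTotal (a : ℕ) (X : Set ℝ) : Set (AddCircle (1:ℝ)) :=
  ⋃ x ∈ X, localDiffSet a X x

/-- the `a`-adic local difference set of `X ⊆ ℝ/ℤ` at `x ∈ ℝ/ℤ`, defined via lifts: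
the difference `u n - v n` is lifted to a real number `d n` tending to `0`. -/
def localDiffSetC (a : ℕ) (X : Set (AddCircle (1:ℝ))) (x : AddCircle (1:ℝ)) :
    Set (AddCircle (1:ℝ)) :=
  { t | ∃ (u v : ℕ → AddCircle (1:ℝ)) (d : ℕ → ℝ),
      (∀ n, u n ∈ X) ∧ (∀ n, v n ∈ X) ∧ (∀ n, u n ≠ v n) ∧ (∀ n, d n ≠ 0) ∧
      (∀ n, ((d n : ℝ) : AddCircle (1:ℝ)) = u n - v n) ∧
      Tendsto u atTop (nhds x) ∧ Tendsto v atTop (nhds x) ∧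
      Tendsto d atTop (nhds 0) ∧
      Tendsto (fun n => fracPart a (d n)) atTop (nhds t) }

/-- `F_{a,X}(X)` for `X ⊆ ℝ/ℤ`. -/
def localDiffSetTotalC (a : ℕ) (X : Set (AddCircle (1:ℝ))) : Set (AddCircle (1:ℝ)) :=
  ⋃ x ∈ X, localDiffSetC a X x

/-- a point whose forward orbit `{T_a^n x : n ≥ 1}` is dense in `X`. -/
noncomputable def IsTransitivePoint (a : ℕ) (X : Set ℝ) (x : ℝ) : Prop :=
  X ⊆ closure {y | ∃ n : ℕ, 1 ≤ n ∧ (Ta a)^[n] x = y}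

/-- a `C²`-diffeomorphism of `ℝ`. -/
def IsC2Diffeo (f : ℝ → ℝ) : Prop :=
  ContDiff ℝ 2 f ∧ Function.Bijective f ∧ ∀ x, deriv f x ≠ 0

/-- a `C¹`-diffeomorphism of `ℝ`. -/
def IsC1Diffeo (f : ℝ → ℝ) : Prop :=
  ContDiff ℝ 1 f ∧ Function.Bijective f ∧ ∀ x, deriv f x ≠ 0

/-- piecewise curved: `f` is `C¹` and `f'` is strictly monotone near every point outside
a discrete set. -/
def PiecewiseCurved (f : ℝ → ℝ) : Prop :=
  ContDiff ℝ 1 f ∧ ∃ E : Set ℝ, DiscreteTopology E ∧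
    ∀ x : ℝ, x ∉ E → ∃ U ∈ nhds x, StrictMonoOn (deriv f) U ∨ StrictAntiOn (deriv f) U

/-- `X` is self-restricted: `X - X ≠ [0,1] mod 1`. -/
def SelfRestricted (X : Set ℝ) : Prop :=
  {t : AddCircle (1:ℝ) | ∃ x ∈ X, ∃ y ∈ X, ((x - y : ℝ) : AddCircle (1:ℝ)) = t} ≠ Set.univ

/-- the covering number `N(X,r)`: minimal number of `r`-balls needed to cover `X`. -/
noncomputable def coveringNumber (r : ℝ) (X : Set ℝ) : ℝ≥0∞ :=
  ⨅ (s : Finset ℝ) (_ : X ⊆ ⋃ c ∈ s, Metric.ball c r), (s.card : ℝ≥0∞)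

/-- upper box (Minkowski) dimension. -/
noncomputable def upperBoxDim (X : Set ℝ) : ℝ≥0∞ :=
  Filter.limsup
    (fun r : ℝ =>
      if coveringNumber r X = ⊤ then ⊤
      else ENNReal.ofReal (Real.log (coveringNumber r X).toReal / Real.log (1 / r)))
    (nhdsWithin 0 (Set.Ioi (0:ℝ)))

/-- a probability measure has dimension `t`: it gives mass `< 1` to every Borel set of
Hausdorff dimension `< t`, and is supported on a Borel set of Hausdorff dimension `t`. -/
def HasDimension (μ : Measure ℝ) (t : ℝ≥0∞) : Prop :=
  (∀ E : Set ℝ, MeasurableSet E → dimH E < t → μ E < 1) ∧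
  ∃ S : Set ℝ, MeasurableSet S ∧ dimH S = t ∧ μ Sᶜ = 0

/-- a piecewise `C²`-diffeomorphism of `ℝ` (relative to `X`): a finite partition of `ℝ` into
intervals, on each of which `f` restricts to a `C²`-diffeomorphism onto its image (except
possibly at the endpoints, which lie outside `X`). -/
def IsPiecewiseC2Diffeo (f : ℝ → ℝ) (X : Set ℝ) : Prop :=
  ∃ (N : ℕ) (I : Fin N → Set ℝ),
    (∀ i, (I i).OrdConnected) ∧
    (⋃ i, I i) = Set.univ ∧
    Pairwise (Function.onFun Disjoint I) ∧
    (∀ i, ContinuousOn f (I i)) ∧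
    (∀ i, Set.InjOn f (I i)) ∧
    (∀ i, ContDiffOn ℝ 2 f (interior (I i))) ∧
    (∀ i, ∀ x ∈ interior (I i), deriv f x ≠ 0) ∧
    (∀ i, frontier (I i) ∩ X = ∅)

/-! ### Micro-configurations -/

/-- The micro-configurations of `X` at `x`, indexed by `ι`: those `d : ι → ℝ` whose difference
pattern `d i - d j` is a limit of patterns `a ^ n * (y i - y j)`, where `n → ∞` and the points
`y i ∈ X` tend to `x`. Only differences matter, so the set is invariant under adding constants. -/
def Micro (a : ℕ) (X : Set ℝ) {ι : Type} (x : ℝ) : Set (ι → ℝ) :=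
  {d | ∀ ε > 0, ∀ N : ℕ, ∃ n ≥ N, ∃ y : ι → ℝ, (∀ i, y i ∈ X ∧ |y i - x| < ε) ∧
    ∀ i j, |(a : ℝ) ^ n * (y i - y j) - (d i - d j)| < ε}

/-- `0` is a fixed point of `T_a`, so an infinite minimal set avoids it. -/
lemma zero_notMem {a : ℕ} {X : Set ℝ} (hXinf : X.Infinite)
    (hXmin : ∀ x ∈ X, IsTransitivePoint a X x) : (0 : ℝ) ∉ X := by
  intro h0
  have h := hXmin 0 h0
  have hfix : ∀ n : ℕ, (Ta a)^[n] 0 = 0 := fun n =>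
    Function.iterate_fixed (by simp [Ta]) n
  have hsub : X ⊆ {0} := by
    refine h.trans (closure_minimal ?_ isClosed_singleton)
    rintro y ⟨n, -, rfl⟩
    exact hfix n
  exact hXinf ((Set.finite_singleton 0).subset hsub)

lemma Ta_locally_affine {a : ℕ} (ha : 2 ≤ a) {x : ℝ} (hx : Ta a x ≠ 0) :
    ∃ η > 0, ∀ y, |y - x| < η → Ta a y = a * y - ⌊(a : ℝ) * x⌋ := by
  have ha0 : (0 : ℝ) < a := by positivity
  have h1 : 0 < Int.fract ((a : ℝ) * x) := lt_of_le_of_ne (Int.fract_nonneg _) (Ne.symm hx)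
  have h2 : Int.fract ((a : ℝ) * x) < 1 := Int.fract_lt_one _
  refine ⟨min (Int.fract ((a : ℝ) * x)) (1 - Int.fract ((a : ℝ) * x)) / a,
    div_pos (lt_min h1 (by linarith)) ha0, fun y hy => ?_⟩
  rw [lt_div_iff₀ ha0] at hy
  have hy' : |(a : ℝ) * y - a * x| <
      min (Int.fract ((a : ℝ) * x)) (1 - Int.fract ((a : ℝ) * x)) := by
    rw [← mul_sub, abs_mul, abs_of_pos ha0]; linarith
  obtain ⟨h3, h4⟩ := lt_min_iff.1 hy'
  have h5 := Int.floor_add_fract ((a : ℝ) * x)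
  have hfl : ⌊(a : ℝ) * y⌋ = ⌊(a : ℝ) * x⌋ := by
    rw [Int.floor_eq_iff]
    rw [abs_lt] at h3 h4
    constructor <;> linarith
  unfold Ta
  rw [Int.fract, hfl]

/-- Applying `T_a` to a configuration multiplies its differences by `a`, which is absorbed by
lowering the exponent `n`. No point of `X` is a discontinuity of `T_a`, because `0 ∉ X`. -/
lemma micro_Ta {a : ℕ} (ha : 2 ≤ a) {X : Set ℝ} (hXinv : Set.MapsTo (Ta a) X X)
    (h0 : (0 : ℝ) ∉ X) {ι : Type} {x : ℝ} (hx : x ∈ X) {d : ι → ℝ}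
    (hd : d ∈ Micro a X x) : d ∈ Micro a X (Ta a x) := by
  have ha0 : (0 : ℝ) < a := by positivity
  have ha1 : (1 : ℝ) ≤ a := by exact_mod_cast (by omega : 1 ≤ a)
  obtain ⟨η, hη, haff⟩ := Ta_locally_affine ha (x := x)
    (fun h => h0 (h ▸ hXinv hx))
  intro ε hε N
  obtain ⟨n, hn, y, hy, hyd⟩ := hd (min (ε / a) η) (lt_min (by positivity) hη) (N + 1)
  obtain ⟨n, rfl⟩ : ∃ m, n = m + 1 := ⟨n - 1, by omega⟩
  have hTy : ∀ i, Ta a (y i) = a * y i - ⌊(a : ℝ) * x⌋ := fun i =>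
    haff _ ((hy i).2.trans_le (min_le_right _ _))
  refine ⟨n, by omega, fun i => Ta a (y i), fun i => ⟨hXinv (hy i).1, ?_⟩, fun i j => ?_⟩
  · have h1 := (hy i).2.trans_le (min_le_left _ _)
    change |Ta a (y i) - Ta a x| < ε
    rw [hTy i, haff x (by simpa using hη)]
    rw [lt_div_iff₀ ha0] at h1
    rw [sub_sub_sub_cancel_right, ← mul_sub, abs_mul, abs_of_pos ha0]; linarith
  · have h1 := (hyd i j).trans_le (min_le_left _ _)
    have h2 : ε / a ≤ ε := div_le_self hε.le ha1
    simp only [hTy]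
    have : (a : ℝ) ^ n * (a * y i - ⌊(a : ℝ) * x⌋ - (a * y j - ⌊(a : ℝ) * x⌋)) =
      (a : ℝ) ^ (n + 1) * (y i - y j) := by ring
    rw [this]; linarith

/-- By minimality, micro-configurations are the same at all points of `X`: they are preserved
along orbits, and are closed under limits of the base point. -/
lemma micro_const {a : ℕ} (ha : 2 ≤ a) {X : Set ℝ} (hXinf : X.Infinite)
    (hXinv : Set.MapsTo (Ta a) X X) (hXmin : ∀ x ∈ X, IsTransitivePoint a X x)
    {ι : Type} {x x' : ℝ} (hx : x ∈ X) (hx' : x' ∈ X) {d : ι → ℝ}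
    (hd : d ∈ Micro a X x) : d ∈ Micro a X x' := by
  have horb : ∀ n : ℕ, (Ta a)^[n] x ∈ X ∧ d ∈ Micro a X ((Ta a)^[n] x) := by
    intro n
    induction n with
    | zero => exact ⟨hx, hd⟩
    | succ n ih =>
      rw [Function.iterate_succ_apply']
      exact ⟨hXinv ih.1, micro_Ta ha hXinv (zero_notMem hXinf hXmin) ih.1 ih.2⟩
  intro ε hε N
  obtain ⟨b, ⟨n, -, rfl⟩, hb⟩ := Metric.mem_closure_iff.1 (hXmin x hx hx') (ε / 2) (half_pos hε)
  obtain ⟨m, hm, y, hy, hyd⟩ := (horb n).2 (ε / 2) (half_pos hε) N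
  refine ⟨m, hm, y, fun i => ⟨(hy i).1, ?_⟩, fun i j => (hyd i j).trans (half_lt_self hε)⟩
  rw [dist_comm, Real.dist_eq] at hb
  have := abs_sub_le (y i) ((Ta a)^[n] x) x'
  linarith [(hy i).2]

lemma micro_closed (a : ℕ) (X : Set ℝ) {ι : Type} [Fintype ι] (x : ℝ) :
    IsClosed (Micro a X x : Set (ι → ℝ)) := by
  refine isClosed_of_closure_subset fun d hd ε hε N => ?_
  obtain ⟨d', hd', hdd⟩ := Metric.mem_closure_iff.1 hd (ε / 4) (by linarith)
  obtain ⟨m, hm, y, hy, hyd⟩ := hd' (ε / 4) (by linarith) N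
  refine ⟨m, hm, y, fun i => ⟨(hy i).1, (hy i).2.trans (by linarith)⟩, fun i j => ?_⟩
  have h1 := (dist_pi_lt_iff (by linarith)).1 hdd i
  have h2 := (dist_pi_lt_iff (by linarith)).1 hdd j
  have h3 := hyd i j
  rw [Real.dist_eq, abs_lt] at h1 h2
  rw [abs_lt] at h3 ⊢
  constructor <;> linarith

/-- A map preserving `X` acts on micro-configurations through its derivative. -/
lemma micro_deriv {a : ℕ} (ha : 2 ≤ a) {X : Set ℝ} {f : ℝ → ℝ} (himg : f '' X ⊆ X)
    {ι : Type} [Finite ι] {x f' : ℝ} (hf : HasStrictDerivAt f f' x) {d : ι → ℝ}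
    (hd : d ∈ Micro a X x) : (fun i => f' * d i) ∈ Micro a X (f x) := by
  have ha0 : (0 : ℝ) < a := by positivity
  intro ε hε N
  obtain ⟨C, hC⟩ : ∃ C : ℝ, ∀ i, |d i| ≤ C := by
    obtain ⟨C, hC⟩ := (Set.finite_range fun i => |d i|).bddAbove
    exact ⟨C, fun i => hC ⟨i, rfl⟩⟩
  have hη : 0 < ε / (2 * (2 * |C| + 1)) := by positivity
  have h1 := hf.isLittleO.def hη
  rw [Metric.eventually_nhds_iff] at h1
  obtain ⟨ρ, hρ, h1⟩ := h1
  obtain ⟨σ, hσ, h2⟩ := Metric.continuousAt_iff.1 hf.hasDerivAt.continuousAt ε hε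
  have hκ : 0 < ε / (2 * (|f'| + 1)) := by positivity
  obtain ⟨n, hn, y, hy, hyd⟩ := hd (min (min ρ σ) (min 1 (ε / (2 * (|f'| + 1)))))
    (lt_min (lt_min hρ hσ) (lt_min one_pos hκ)) N
  refine ⟨n, hn, fun i => f (y i), fun i => ⟨himg ⟨_, (hy i).1, rfl⟩, ?_⟩, fun i j => ?_⟩
  · exact h2 ((hy i).2.trans_le ((min_le_left _ _).trans (min_le_right _ _)))
  · have hi := (hy i).2.trans_le ((min_le_left _ _).trans (min_le_left _ _))
    have hj := (hy j).2.trans_le ((min_le_left _ _).trans (min_le_left _ _))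
    have h3 : ‖f (y i) - f (y j) - (y i - y j) * f'‖ ≤
        ε / (2 * (2 * |C| + 1)) * ‖y i - y j‖ := by
      have := @h1 (y i, y j) (by rw [Prod.dist_eq]; exact max_lt hi hj)
      simpa using this
    rw [Real.norm_eq_abs, Real.norm_eq_abs] at h3
    have h4 := (hyd i j).trans_le ((min_le_right _ _).trans (min_le_left _ _))
    have h5 := (hyd i j).trans_le ((min_le_right _ _).trans (min_le_right _ _))
    have han : (0 : ℝ) < (a : ℝ) ^ n := by positivity
    set A := (a : ℝ) ^ n with hA
    have h6 : A * |y i - y j| ≤ 2 * |C| + 1 := by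
      have e1 : A * |y i - y j| = |A * (y i - y j)| := by rw [abs_mul, abs_of_pos han]
      have e2 := hC i
      have e3 := hC j
      have e4 := le_abs_self C
      rw [e1]
      rw [abs_lt] at h4
      rw [abs_le] at e2 e3 ⊢
      constructor <;> linarith
    have h7 : |A * (f (y i) - f (y j) - (y i - y j) * f')| ≤ ε / 2 := by
      rw [abs_mul, abs_of_pos han]
      calc A * |f (y i) - f (y j) - (y i - y j) * f'|
          ≤ A * (ε / (2 * (2 * |C| + 1)) * |y i - y j|) := by gcongr
        _ = ε / (2 * (2 * |C| + 1)) * (A * |y i - y j|) := by ring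
        _ ≤ ε / (2 * (2 * |C| + 1)) * (2 * |C| + 1) := by gcongr
        _ = ε / 2 := by field_simp
    have h8 : |f' * (A * (y i - y j) - (d i - d j))| < ε / 2 := by
      rw [abs_mul]
      calc |f'| * |A * (y i - y j) - (d i - d j)|
          ≤ |f'| * (ε / (2 * (|f'| + 1))) := by gcongr
        _ < (|f'| + 1) * (ε / (2 * (|f'| + 1))) := by gcongr; linarith
        _ = ε / 2 := by field_simp
    have : A * (f (y i) - f (y j)) - (f' * d i - f' * d j) =
      A * (f (y i) - f (y j) - (y i - y j) * f') + f' * (A * (y i - y j) - (d i - d j)) := by ring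
    rw [this]
    exact (abs_add_le _ _).trans_lt (by linarith)

lemma micro_mul_base {a : ℕ} (ha : 2 ≤ a) {X : Set ℝ} {ι : Type} {x : ℝ} {d : ι → ℝ}
    (hd : d ∈ Micro a X x) : (fun i => (a : ℝ) * d i) ∈ Micro a X x := by
  have ha0 : (0 : ℝ) < a := by positivity
  have ha1 : (1 : ℝ) ≤ a := by exact_mod_cast (by omega : 1 ≤ a)
  intro ε hε N
  obtain ⟨n, hn, y, hy, hyd⟩ := hd (ε / a) (by positivity) N
  have h2 : ε / a ≤ ε := div_le_self hε.le ha1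
  refine ⟨n + 1, by omega, y, fun i => ⟨(hy i).1, (hy i).2.trans_le h2⟩, fun i j => ?_⟩
  have h1 := hyd i j
  rw [lt_div_iff₀ ha0] at h1
  have : (a : ℝ) ^ (n + 1) * (y i - y j) - (a * d i - a * d j) =
    ((a : ℝ) ^ n * (y i - y j) - (d i - d j)) * a := by ring
  rwa [this, abs_mul, abs_of_pos ha0]

lemma micro_div_base {a : ℕ} (ha : 2 ≤ a) {X : Set ℝ} {ι : Type} {x : ℝ} {d : ι → ℝ}
    (hd : d ∈ Micro a X x) : (fun i => (a : ℝ)⁻¹ * d i) ∈ Micro a X x := by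
  have ha0 : (0 : ℝ) < a := by positivity
  have ha1 : (1 : ℝ) ≤ a := by exact_mod_cast (by omega : 1 ≤ a)
  intro ε hε N
  obtain ⟨n, hn, y, hy, hyd⟩ := hd ε hε (N + 1)
  obtain ⟨n, rfl⟩ : ∃ m, n = m + 1 := ⟨n - 1, by omega⟩
  refine ⟨n, by omega, y, hy, fun i j => ?_⟩
  have h1 := hyd i j
  have : (a : ℝ) ^ n * (y i - y j) - ((a : ℝ)⁻¹ * d i - (a : ℝ)⁻¹ * d j) =
    (a : ℝ)⁻¹ * ((a : ℝ) ^ (n + 1) * (y i - y j) - (d i - d j)) := by field_simp; ring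
  rw [this, abs_mul, abs_of_pos (inv_pos.2 ha0)]
  have h3 : (a : ℝ)⁻¹ ≤ 1 := inv_le_one_of_one_le₀ ha1
  exact (mul_le_of_le_one_left (abs_nonneg _) h3).trans_lt h1

lemma iterate_Ta_eq (a : ℕ) (n : ℕ) (y : ℝ) :
    ∃ m : ℤ, (a : ℝ) ^ n * y = (Ta a)^[n] y + m := by
  induction n with
  | zero => exact ⟨0, by simp⟩
  | succ n ih =>
    obtain ⟨m, hm⟩ := ih
    refine ⟨⌊(a : ℝ) * (Ta a)^[n] y⌋ + a * m, ?_⟩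
    rw [Function.iterate_succ_apply', pow_succ', mul_assoc, hm]
    simp only [Ta, Int.fract]
    push_cast
    ring

/-- Up to `ε`, every micro-configuration has a translate lying in `X + ℤ`: blow the points `y i`
up by `T_a^n`. -/
lemma micro_realize {a : ℕ} {X : Set ℝ} (hXinv : Set.MapsTo (Ta a) X X)
    {ι : Type} [Nonempty ι] {x : ℝ} {d : ι → ℝ} (hd : d ∈ Micro a X x) {ε : ℝ} (hε : 0 < ε) :
    ∃ t : ℝ, ∀ i, ∃ z ∈ X, ∃ m : ℤ, |d i + t - z - m| < ε := by
  obtain ⟨n, -, y, hy, hyd⟩ := hd ε hε 0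
  obtain ⟨i₀⟩ := ‹Nonempty ι›
  refine ⟨(a : ℝ) ^ n * y i₀ - d i₀, fun i => ?_⟩
  obtain ⟨m, hm⟩ := iterate_Ta_eq a n (y i)
  refine ⟨(Ta a)^[n] (y i), hXinv.iterate n (hy i).1, m, ?_⟩
  have h1 := hyd i i₀
  rw [abs_sub_comm] at h1
  convert h1 using 2
  linarith

/-! ### The group of scales -/

/-- A closed additive submonoid of `ℝ` containing `±1` is a group, because its image in the
circle is a closed subsemigroup; hence it is `ℝ` or contained in `(1/m)ℤ`. -/
lemma closed_submonoid_real (S : Set ℝ) (hcl : IsClosed S) (h0 : (0 : ℝ) ∈ S)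
    (hadd : ∀ s ∈ S, ∀ t ∈ S, s + t ∈ S) (h1 : (1 : ℝ) ∈ S) (hm1 : (-1 : ℝ) ∈ S) :
    S = univ ∨ ∃ m : ℤ, m ≠ 0 ∧ ∀ s ∈ S, ∃ j : ℤ, s * m = j := by
  have hnat : ∀ s ∈ S, ∀ n : ℕ, n * s ∈ S := by
    intro s hs n
    induction n with
    | zero => simpa using h0
    | succ n ih => push_cast; rw [add_mul, one_mul]; exact hadd _ ih _ hs
  have hint : ∀ j : ℤ, (j : ℝ) ∈ S := by
    intro j
    rcases Int.eq_nat_or_neg j with ⟨n, rfl | rfl⟩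
    · simpa using hnat 1 h1 n
    · simpa using hnat (-1) hm1 n
  -- Dirichlet approximation brings `(k - 1) * s - j` close to `-s`
  have hneg : ∀ s ∈ S, -s ∈ S := by
    intro s hs
    rw [← hcl.closure_eq, Metric.mem_closure_iff]
    intro ε hε
    obtain ⟨n, hn⟩ := exists_nat_one_div_lt hε
    obtain ⟨j, k, hk, -, hjk⟩ := Real.exists_int_int_abs_mul_sub_le s (Nat.succ_pos n)
    obtain ⟨l, rfl⟩ : ∃ l : ℕ, k = l + 1 := ⟨(k - 1).toNat, by omega⟩
    refine ⟨l * s + ((-j : ℤ) : ℝ), hadd _ (hnat s hs l) _ (hint _), ?_⟩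
    rw [dist_comm, Real.dist_eq]
    have h2 : (l : ℝ) * s + ((-j : ℤ) : ℝ) - -s = (((l : ℤ) + 1 : ℤ) : ℝ) * s - j := by
      push_cast; ring
    rw [h2]
    refine hjk.trans_lt (lt_of_le_of_lt ?_ hn)
    push_cast
    apply one_div_le_one_div_of_le <;> [positivity; linarith]
  let G : AddSubgroup ℝ :=
    { carrier := S, add_mem' := fun {x y} hx hy => hadd x hx y hy, zero_mem' := h0,
      neg_mem' := fun {x} hx => hneg x hx }
  rcases AddSubgroup.dense_or_cyclic G with hd | ⟨g, hg⟩
  · left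
    rw [← hcl.closure_eq]
    exact hd.closure_eq
  · right
    have hmem : ∀ s ∈ S, ∃ j : ℤ, j • g = s := by
      intro s hs
      have : s ∈ AddSubgroup.closure {g} := hg ▸ (show s ∈ G from hs)
      exact AddSubgroup.mem_closure_singleton.1 this
    obtain ⟨m, hm⟩ := hmem 1 h1
    refine ⟨m, ?_, fun s hs => ?_⟩
    · rintro rfl; simp at hm
    · obtain ⟨j, rfl⟩ := hmem s hs
      refine ⟨j, ?_⟩
      simp only [zsmul_eq_mul] at hm ⊢
      linear_combination (j : ℝ) * hm

/-- The micro-configurations common to all points of `X`. -/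
def MSet (a : ℕ) (X : Set ℝ) (ι : Type) : Set (ι → ℝ) := {d | ∀ x ∈ X, d ∈ Micro a X x}

/-- The exponents `s` such that dilation by `a ^ s` preserves the micro-configurations of `X`. -/
def Stab (a : ℕ) (X : Set ℝ) (ι : Type) : Set ℝ :=
  {s | ∀ d ∈ MSet a X ι, (fun i => (a : ℝ) ^ s * d i) ∈ MSet a X ι}

lemma mset_closed (a : ℕ) (X : Set ℝ) (ι : Type) [Fintype ι] : IsClosed (MSet a X ι) := by
  have : MSet a X ι = ⋂ x ∈ X, Micro a X x := by
    ext d; simp [MSet]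
  rw [this]
  exact isClosed_biInter fun x _ => micro_closed a X x

lemma stab_dichotomy {a : ℕ} (ha : 2 ≤ a) (X : Set ℝ) (ι : Type) [Fintype ι] :
    Stab a X ι = univ ∨ ∃ m : ℤ, m ≠ 0 ∧ ∀ s ∈ Stab a X ι, ∃ j : ℤ, s * m = j := by
  have ha0 : (0 : ℝ) < a := by positivity
  apply closed_submonoid_real
  · have : Stab a X ι =
        ⋂ d ∈ MSet a X ι, (fun (s : ℝ) (i : ι) => (a : ℝ) ^ s * d i) ⁻¹' MSet a X ι := by
      ext s; simp [Stab]
    rw [this]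
    refine isClosed_biInter fun d _ => (mset_closed a X ι).preimage ?_
    exact continuous_pi fun i => (Real.continuous_const_rpow ha0.ne').mul continuous_const
  · intro d hd; simpa using hd
  · intro s hs t ht d hd
    simpa only [Real.rpow_add ha0, mul_assoc] using hs _ (ht _ hd)
  · intro d hd x hx
    simpa using micro_mul_base ha (hd x hx)
  · intro d hd x hx
    simpa [Real.rpow_neg_one] using micro_div_base ha (hd x hx)

/-- The factor `2` removes the sign of `f' x`: the dilation by `f' x` is applied twice. -/
lemma log_deriv_mem_stab {a : ℕ} (ha : 2 ≤ a) {X : Set ℝ} (hXinf : X.Infinite)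
    (hXinv : Set.MapsTo (Ta a) X X) (hXmin : ∀ x ∈ X, IsTransitivePoint a X x)
    {f : ℝ → ℝ} (himg : f '' X ⊆ X) (ι : Type) [Finite ι] {f' : ℝ → ℝ}
    (hf : ∀ x, HasStrictDerivAt f (f' x) x) {x : ℝ} (hx : x ∈ X) (hf' : f' x ≠ 0) :
    2 * Real.logb a |f' x| ∈ Stab a X ι := by
  have ha0 : (0 : ℝ) < a := by positivity
  have ha1 : (1 : ℝ) < a := by exact_mod_cast (by omega : 1 < a)
  have hstep : ∀ d ∈ MSet a X ι, (fun i => f' x * d i) ∈ MSet a X ι := fun d hd x' hx' =>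
    micro_const ha hXinf hXinv hXmin (himg ⟨x, hx, rfl⟩) hx' (micro_deriv ha himg (hf x) (hd x hx))
  intro d hd
  have h1 := hstep _ (hstep _ hd)
  have h2 : (a : ℝ) ^ (2 * Real.logb a |f' x|) = f' x * f' x := by
    rw [mul_comm, Real.rpow_mul ha0.le, Real.rpow_logb ha0 ha1.ne' (abs_pos.2 hf')]
    norm_cast
    rw [sq_abs, sq]
  rw [h2]
  simpa only [mul_assoc] using h1

lemma mul_mem_mset {a : ℕ} (ha : 2 ≤ a) {X : Set ℝ} {ι : Type} (hS : Stab a X ι = univ)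
    {d : ι → ℝ} (hd : d ∈ MSet a X ι) {r : ℝ} (hr : 0 < r) :
    (fun i => r * d i) ∈ MSet a X ι := by
  have ha0 : (0 : ℝ) < a := by positivity
  have ha1 : (1 : ℝ) < a := by exact_mod_cast (by omega : 1 < a)
  have : Real.logb a r ∈ Stab a X ι := hS ▸ mem_univ _
  have h := this d hd
  rwa [Real.rpow_logb ha0 ha1.ne' hr] at h

/-! ### Existence of micro-configurations with distinct points -/

/-- Compactness: configurations in `X` at scales `a ^ (-n)`, `n → ∞`, whose rescalings are
uniformly separated, accumulate at a micro-configuration with distinct points. -/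
lemma exists_config {a : ℕ} (ha : 2 ≤ a) {X : Set ℝ} (hXc : IsCompact X) (hXinf : X.Infinite)
    (hXinv : Set.MapsTo (Ta a) X X) (hXmin : ∀ x ∈ X, IsTransitivePoint a X x)
    (ι : Type) [Fintype ι] [Nonempty ι] {c : ℝ} (hc : 0 < c)
    (h : ∀ n₀ : ℕ, ∃ n ≥ n₀, ∃ y : ι → ℝ, (∀ i, y i ∈ X) ∧
      (∀ i j, (a : ℝ) ^ n * |y i - y j| ≤ 1) ∧ ∀ i j, i ≠ j → c ≤ (a : ℝ) ^ n * |y i - y j|) :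
    ∃ d ∈ MSet a X ι, Function.Injective d := by
  have ha0 : (0 : ℝ) < a := by positivity
  have ha1 : (1 : ℝ) < a := by exact_mod_cast (by omega : 1 < a)
  choose n hn y hyX hy1 hyc using h
  obtain ⟨i₀⟩ := ‹Nonempty ι›
  have habs : ∀ k i j, |(a : ℝ) ^ n k * (y k i - y k j)| = (a : ℝ) ^ n k * |y k i - y k j| := by
    intro k i j
    rw [abs_mul, abs_of_pos (by positivity)]
  obtain ⟨⟨x, d⟩, hxd, φ, hφ, hlim⟩ :=
    (hXc.prod (isCompact_univ_pi fun _ : ι => isCompact_Icc (a := (-1 : ℝ)) (b := 1))).tendsto_subseq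
      (x := fun k => (y k i₀, fun i => (a : ℝ) ^ n k * (y k i - y k i₀)))
      (fun k => ⟨hyX k i₀, fun i _ => abs_le.1 ((habs k i i₀).trans_le (hy1 k i i₀))⟩)
  rw [nhds_prod_eq] at hlim
  have hlim1 := (tendsto_fst.comp hlim)
  have hlim2 := (tendsto_snd.comp hlim)
  have hnφ : Tendsto (fun k => n (φ k)) atTop atTop :=
    (tendsto_atTop_mono hn tendsto_id).comp hφ.tendsto_atTop
  have hsmall : Tendsto (fun k => ((a : ℝ) ^ n (φ k))⁻¹) atTop (nhds 0) :=
    tendsto_inv_atTop_zero.comp ((tendsto_pow_atTop_atTop_of_one_lt ha1).comp hnφ)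
  refine ⟨d, fun x' hx' => micro_const ha hXinf hXinv hXmin hxd.1 hx' ?_, fun i j hij => ?_⟩
  · intro ε hε N
    have e1 := Metric.tendsto_nhds.1 hlim1 (ε / 2) (half_pos hε)
    have e2 := Metric.tendsto_nhds.1 hlim2 (ε / 2) (half_pos hε)
    have e3 := hsmall.eventually_lt_const (half_pos hε)
    obtain ⟨k, hk1, hk2, hk3, hk4⟩ :=
      (e1.and (e2.and (e3.and (hnφ.eventually_ge_atTop N)))).exists
    refine ⟨n (φ k), hk4, y (φ k), fun i => ⟨hyX _ i, ?_⟩, fun i j => ?_⟩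
    · have h1 := hy1 (φ k) i i₀
      rw [mul_comm, ← le_div_iff₀ (by positivity), one_div] at h1
      simp only [Function.comp, Real.dist_eq] at hk1
      have := abs_sub_le (y (φ k) i) (y (φ k) i₀) x
      linarith
    · have h1 := (dist_pi_lt_iff (half_pos hε)).1 hk2 i
      have h2 := (dist_pi_lt_iff (half_pos hε)).1 hk2 j
      simp only [Function.comp, Real.dist_eq] at h1 h2
      rw [abs_lt] at h1 h2 ⊢
      constructor <;> linarith
  · by_contra hne
    have hi := (tendsto_pi_nhds.1 hlim2 i)
    have hj := (tendsto_pi_nhds.1 hlim2 j)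
    have h1 := (hi.sub hj).abs
    have h2 : c ≤ |d i - d j| := by
      refine ge_of_tendsto' h1 fun k => ?_
      have := hyc (φ k) i j hne
      rw [← habs] at this
      refine this.trans (le_of_eq ?_)
      simp only [Function.comp]
      congr 1
      ring
    rw [hij, sub_self, abs_zero] at h2
    linarith

lemma exists_pair_config {a : ℕ} (ha : 2 ≤ a) {X : Set ℝ} (hXc : IsCompact X)
    (hXinf : X.Infinite) (hXinv : Set.MapsTo (Ta a) X X)
    (hXmin : ∀ x ∈ X, IsTransitivePoint a X x) :
    ∃ d ∈ MSet a X (Fin 2), Function.Injective d := by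
  have ha0 : (0 : ℝ) < a := by positivity
  have ha1 : (1 : ℝ) < a := by exact_mod_cast (by omega : 1 < a)
  obtain ⟨x, hx, hacc⟩ := hXinf.exists_accPt_of_subset_isCompact hXc subset_rfl
  refine exists_config ha hXc hXinf hXinv hXmin (Fin 2) (inv_pos.2 ha0) fun n₀ => ?_
  obtain ⟨z, ⟨hz, hzX⟩, hzx⟩ := accPt_iff_nhds.1 hacc (Metric.ball x (((a : ℝ) ^ (n₀ + 1))⁻¹))
    (Metric.ball_mem_nhds _ (by positivity))
  rw [Metric.mem_ball, Real.dist_eq] at hz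
  have hpos : 0 < |z - x| := abs_pos.2 (sub_ne_zero.2 hzx)
  obtain ⟨n, hn1, hn2⟩ := exists_nat_pow_near (x := |z - x|⁻¹) (y := (a : ℝ))
    (by
      rw [one_le_inv₀ hpos]
      exact hz.le.trans (inv_le_one_of_one_le₀ (one_le_pow₀ ha1.le))) ha1
  have hle : (a : ℝ) ^ n * |z - x| ≤ 1 := by
    rwa [← le_div_iff₀ hpos, one_div]
  have hge : (a : ℝ)⁻¹ ≤ (a : ℝ) ^ n * |z - x| := by
    rw [inv_lt_iff_one_lt_mul₀ hpos] at hn2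
    rw [inv_le_iff_one_le_mul₀ ha0]
    have : (a : ℝ) ^ n * |z - x| * a = |z - x| * a ^ (n + 1) := by ring
    nlinarith
  refine ⟨n, ?_, ![x, z], ?_, ?_, ?_⟩
  · have h1 : (a : ℝ) ^ (n₀ + 1) < a ^ (n + 1) := by
      refine lt_trans ?_ hn2
      rwa [lt_inv_comm₀ (by positivity) hpos]
    have := (pow_lt_pow_iff_right₀ ha1).1 h1
    omega
  · intro i; fin_cases i <;> simpa
  · intro i j
    fin_cases i <;> fin_cases j <;> simp [abs_sub_comm x z, hle]
  · intro i j hij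
    fin_cases i <;> fin_cases j <;> simp_all [abs_sub_comm x z]

/-! ### Spreading many points around the circle by one dilation -/

/-- Any sufficiently large finite `D ⊆ ℝ` contains points `d₀, e 0, …, e (k - 1)` such that one
dilation `r > 0` brings `r * (e i - d₀)` within `δ` of prescribed targets `θ i` modulo `1`.
The points are picked lacunary: by pigeonhole, many points of `D` lie in an interval `B` times
shorter than the spread of `D`; the induction handles these, and an endpoint of `D` serves as
the last point. The targets are met for a whole interval of `r`, long enough for the larger
difference to make a full turn. -/
lemma lacunary_targets {δ : ℝ} (hδ : 0 < δ) {B : ℕ} (hB : δ + 1 ≤ δ * B) (hB2 : 2 ≤ B)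
    (θ : ℕ → ℝ) (k : ℕ) : ∀ (D : Finset ℝ), (B + 1) ^ k ≤ D.card → ∀ Δ > 0,
      (∀ x ∈ D, ∀ y ∈ D, |x - y| ≤ Δ) →
      ∃ d₀ ∈ D, ∃ e : ℕ → ℝ, (∀ i < k, e i ∈ D) ∧ ∃ r₀ > 0, ∀ r ∈ Icc r₀ (r₀ + 2 * δ / Δ),
        ∀ i < k, ∃ m : ℤ, |r * (e i - d₀) - θ i - m| ≤ δ := by
  induction k with
  | zero =>
    intro D hD Δ hΔ hdiam
    obtain ⟨d₀, hd₀⟩ : D.Nonempty := Finset.card_pos.1 (by simpa using hD)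
    exact ⟨d₀, hd₀, fun _ => 0, by simp, 1, one_pos, by simp⟩
  | succ k ih =>
    intro D hD Δ hΔ hdiam
    have hBp : (0 : ℝ) < B := by positivity
    have hcard : 1 < D.card := by
      refine lt_of_lt_of_le ?_ hD
      exact Nat.one_lt_pow (by omega) (by omega)
    have hne : D.Nonempty := Finset.card_pos.1 (by omega)
    have hminlt := Finset.min'_lt_max'_of_card D hcard
    set p := D.min' hne
    set q := D.max' hne
    have hpD : p ∈ D := D.min'_mem hne
    have hqD : q ∈ D := D.max'_mem hne
    have hp : ∀ z ∈ D, p ≤ z := fun z hz => D.min'_le z hz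
    have hq : ∀ z ∈ D, z ≤ q := fun z hz => D.le_max' z hz
    set Δ₀ := q - p with hΔ₀
    have hΔ₀pos : 0 < Δ₀ := sub_pos.2 hminlt
    have hΔ₀le : Δ₀ ≤ Δ := (le_abs_self _).trans (hdiam q hqD p hpD)
    -- split `[p, q]` into pieces of length `Δ₀ / B`
    obtain ⟨b, -, hb⟩ := Finset.exists_le_card_fiber_of_mul_le_card_of_maps_to
      (s := D) (t := Finset.range (B + 1)) (f := fun z => ⌊(z - p) * B / Δ₀⌋₊)
      (n := (B + 1) ^ k)
      (by
        intro z hz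
        rw [Finset.mem_range, Nat.lt_succ_iff]
        apply Nat.floor_le_of_le
        rw [div_le_iff₀ hΔ₀pos, mul_comm]
        have : z - p ≤ Δ₀ := sub_le_sub_right (hq z hz) p
        gcongr)
      ⟨0, by simp⟩ (by rw [Finset.card_range, ← pow_succ']; exact hD)
    obtain ⟨d₀, hd₀, e, he, r₀, hr₀, hr⟩ := ih _ hb (Δ₀ / B) (by positivity) (by
      intro x hx y hy
      rw [Finset.mem_filter] at hx hy
      have hx0 : 0 ≤ (x - p) * B / Δ₀ :=
        div_nonneg (mul_nonneg (sub_nonneg.2 (hp x hx.1)) hBp.le) hΔ₀pos.le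
      have hy0 : 0 ≤ (y - p) * B / Δ₀ :=
        div_nonneg (mul_nonneg (sub_nonneg.2 (hp y hy.1)) hBp.le) hΔ₀pos.le
      have hx1 := (Nat.floor_eq_iff hx0).1 hx.2
      have hy1 := (Nat.floor_eq_iff hy0).1 hy.2
      have h1 : |(x - p) * B / Δ₀ - (y - p) * B / Δ₀| ≤ 1 := by
        rw [abs_le]; constructor <;> linarith
      have h2 : (x - p) * B / Δ₀ - (y - p) * B / Δ₀ = (x - y) * (B / Δ₀) := by ring
      rw [h2, abs_mul, abs_of_pos (by positivity : (0 : ℝ) < B / Δ₀),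
        ← le_div_iff₀ (by positivity)] at h1
      simpa using h1)
    have hd₀D : d₀ ∈ D := (Finset.mem_filter.1 hd₀).1
    -- the farther endpoint of `D` is at distance at least `Δ₀ / 2` from `d₀`
    obtain ⟨d₁, hd₁, hfar⟩ : ∃ d₁ ∈ D, Δ₀ / 2 ≤ |d₁ - d₀| := by
      by_cases h : Δ₀ / 2 ≤ |p - d₀|
      · exact ⟨p, hpD, h⟩
      · refine ⟨q, hqD, ?_⟩
        have h1 := abs_sub_le q d₀ p
        rw [abs_of_pos (sub_pos.2 hminlt), abs_sub_comm d₀ p] at h1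
        linarith
    have hnear : |d₁ - d₀| ≤ Δ := hdiam _ hd₁ _ hd₀D
    set v := d₁ - d₀ with hv
    have hvpos : 0 < |v| := lt_of_lt_of_le (by positivity) hfar
    have hv0 : v ≠ 0 := abs_pos.1 hvpos
    -- as `r` increases by `1 / |v|`, `r * v` makes a full turn and meets the target `θ k`
    obtain ⟨m, s, hs1, hs2, hs⟩ : ∃ (m : ℤ) (s : ℝ), r₀ + δ / Δ ≤ s ∧
        s ≤ r₀ + δ / Δ + 1 / |v| ∧ s * v = θ k + m := by
      generalize r₀ + δ / Δ = l
      rcases lt_or_gt_of_ne hv0 with hneg | hpos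
      · refine ⟨⌊l * v - θ k⌋, (θ k + ⌊l * v - θ k⌋) / v, ?_, ?_, by field_simp⟩
        · rw [le_div_iff_of_neg hneg]
          linarith [Int.floor_le (l * v - θ k)]
        · rw [div_le_iff_of_neg hneg, abs_of_neg hneg, add_mul]
          have : 1 / -v * v = -1 := by field_simp
          rw [this]
          linarith [Int.lt_floor_add_one (l * v - θ k)]
      · refine ⟨⌈l * v - θ k⌉, (θ k + ⌈l * v - θ k⌉) / v, ?_, ?_, by field_simp⟩
        · rw [le_div_iff₀ hpos]
          linarith [Int.le_ceil (l * v - θ k)]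
        · rw [div_le_iff₀ hpos, abs_of_pos hpos, add_mul]
          have : 1 / v * v = 1 := by field_simp
          rw [this]
          linarith [Int.ceil_lt_add_one (l * v - θ k)]
    have h1v : 1 / |v| ≤ 2 / Δ₀ := by
      rw [div_le_div_iff₀ hvpos hΔ₀pos]; linarith
    have hδΔ : δ / Δ ≤ δ / Δ₀ := by gcongr
    have hlen : 2 * (δ / Δ₀) + 2 / Δ₀ ≤ 2 * δ / (Δ₀ / B) := by
      have : 2 * δ / (Δ₀ / B) = 2 * (δ * B) / Δ₀ := by field_simp
      rw [this, ← mul_div_assoc, ← add_div]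
      gcongr
      linarith
    refine ⟨d₀, hd₀D, Function.update e k d₁, ?_, s - δ / Δ, by linarith, ?_⟩
    · intro i hi
      rcases eq_or_ne i k with rfl | hik
      · simpa using hd₁
      · rw [Function.update_of_ne hik]
        exact (Finset.mem_filter.1 (he i (by omega))).1
    · intro r hrI i hi
      rw [mul_div_assoc] at hrI
      obtain ⟨hrI1, hrI2⟩ := hrI
      rcases eq_or_ne i k with rfl | hik
      · refine ⟨m, ?_⟩
        rw [Function.update_self, ← hv]
        have : r * v - θ i - m = (r - s) * v := by linear_combination hs
        rw [this, abs_mul]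
        have h3 : |r - s| ≤ δ / Δ := by rw [abs_le]; constructor <;> linarith
        calc |r - s| * |v| ≤ δ / Δ * Δ := by gcongr
          _ = δ := by field_simp
      · rw [Function.update_of_ne hik]
        exact hr r ⟨by linarith, by linarith⟩ i (by omega)

/-- `X` stays away from the integers, i.e. its image in the circle omits a neighbourhood of `0`. -/
lemma gap {X : Set ℝ} (hXsub : X ⊆ Set.Icc 0 1) (hXcl : IsClosed X)
    (h0 : (0 : ℝ) ∉ X) (h1 : (1 : ℝ) ∉ X) :
    ∃ η > 0, ∀ z ∈ X, ∀ m : ℤ, η ≤ |z - m| := by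
  obtain ⟨η₀, hη₀, hb0⟩ := Metric.isOpen_iff.1 hXcl.isOpen_compl 0 h0
  obtain ⟨η₁, hη₁, hb1⟩ := Metric.isOpen_iff.1 hXcl.isOpen_compl 1 h1
  refine ⟨min η₀ η₁, lt_min hη₀ hη₁, fun z hz m => ?_⟩
  have hz01 := hXsub hz
  have hz0 : η₀ ≤ z := by
    by_contra! hlt
    refine hb0 ?_ hz
    rwa [Metric.mem_ball, Real.dist_eq, sub_zero, abs_of_nonneg hz01.1]
  have hz1 : η₁ ≤ 1 - z := by
    by_contra! hlt
    refine hb1 ?_ hz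
    rwa [Metric.mem_ball, dist_comm, Real.dist_eq, abs_of_nonneg (by linarith [hz01.2])]
  rcases le_or_gt m 0 with hm | hm
  · have : (m : ℝ) ≤ 0 := by exact_mod_cast hm
    exact (min_le_left _ _).trans (le_abs.2 (Or.inl (by linarith)))
  · have : (1 : ℝ) ≤ m := by exact_mod_cast hm
    exact (min_le_right _ _).trans (le_abs.2 (Or.inr (by linarith)))

/-- If every dilation preserves micro-configurations, these cannot have arbitrarily many distinct
points: a suitable dilation of such a configuration has all its translates dense enough modulo
`1` to enter the gap of `X`. -/
lemma bounded_config {a : ℕ} (ha : 2 ≤ a) {X : Set ℝ} (hX : X.Nonempty)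
    (hXinv : Set.MapsTo (Ta a) X X) {η : ℝ} (hη : 0 < η)
    (hgap : ∀ z ∈ X, ∀ m : ℤ, η ≤ |z - m|) :
    ∃ K : ℕ, 0 < K ∧ (Stab a X (Fin K) = univ →
      ∀ d ∈ MSet a X (Fin K), ¬ Function.Injective d) := by
  classical
  set δ := η / 4 with hδ
  have hδp : 0 < δ := by positivity
  obtain ⟨k, hk⟩ := exists_nat_gt (1 / δ)
  obtain ⟨B, hB⟩ := exists_nat_ge (max ((δ + 1) / δ) 2)
  have hB1 : δ + 1 ≤ δ * B := by
    have := (le_max_left _ _).trans hB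
    rw [div_le_iff₀ hδp] at this
    linarith
  have hB2 : 2 ≤ B := by exact_mod_cast (le_max_right _ _).trans hB
  have hkp : (0 : ℝ) < k := lt_trans (by positivity) hk
  have hkδ : 1 / (k : ℝ) < δ := by
    rw [div_lt_iff₀ hδp] at hk
    rw [div_lt_iff₀ hkp]
    linarith
  refine ⟨(B + 1) ^ k, by positivity, fun hS d hd hinj => ?_⟩
  have hcard : (Finset.univ.image d).card = (B + 1) ^ k := by
    rw [Finset.card_image_of_injective _ hinj, Finset.card_univ, Fintype.card_fin]
  obtain ⟨C, hC⟩ := (Set.finite_range fun p : Fin ((B + 1) ^ k) × Fin ((B + 1) ^ k) =>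
    |d p.1 - d p.2|).bddAbove
  obtain ⟨d₀, -, e, he, r, hr, hre⟩ := lacunary_targets hδp hB1 hB2 (fun i => (i : ℝ) / k) k
    (Finset.univ.image d) hcard.ge (max C 1) (by positivity) (by
      intro x hx y hy
      simp only [Finset.mem_image, Finset.mem_univ, true_and] at hx hy
      obtain ⟨i, rfl⟩ := hx
      obtain ⟨j, rfl⟩ := hy
      exact le_trans (hC ⟨(i, j), rfl⟩) (le_max_left _ _))
  replace hre := hre r ⟨le_rfl, by
    have : (0 : ℝ) < max C 1 := by positivity
    have : 0 ≤ 2 * δ / max C 1 := by positivity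
    linarith⟩
  obtain ⟨x, hx⟩ := hX
  have : Nonempty (Fin ((B + 1) ^ k)) := ⟨⟨0, by positivity⟩⟩
  obtain ⟨t, ht⟩ := micro_realize hXinv (mul_mem_mset ha hS hd hr x hx) hδp
  -- choose the target `i / k` nearest to `τ = -(r * d₀ + t)` modulo `1`
  set τ := -(r * d₀ + t) with hτ
  set i := ⌊Int.fract τ * k⌋₊ with hi
  have hf0 := Int.fract_nonneg τ
  have hf1 := Int.fract_lt_one τ
  have hi1 : (i : ℝ) ≤ Int.fract τ * k := Nat.floor_le (by positivity)
  have hi2 : Int.fract τ * k < i + 1 := Nat.lt_floor_add_one _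
  have hik : i < k := by
    have : (i : ℝ) < k := hi1.trans_lt (by nlinarith)
    exact_mod_cast this
  have hclose : |(i : ℝ) / k - Int.fract τ| < δ := by
    rw [abs_lt]
    constructor
    · have : Int.fract τ < (i : ℝ) / k + 1 / k := by
        rw [← add_div, lt_div_iff₀ hkp]; exact hi2
      linarith
    · have : (i : ℝ) / k ≤ Int.fract τ := by rwa [div_le_iff₀ hkp]
      linarith
  obtain ⟨m, hm⟩ := hre i hik
  obtain ⟨j, -, hj⟩ := Finset.mem_image.1 (he i hik)
  obtain ⟨z, hz, m', hm'⟩ := ht j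
  have hg := hgap z hz (m - ⌊τ⌋ - m')
  have hfl := Int.floor_add_fract τ
  rw [hj] at hm'
  push_cast at hg
  have h4 : δ * 4 = η := by rw [hδ]; ring
  rw [abs_lt] at hclose hm'
  rw [abs_le] at hm
  have : |z - (m - ⌊τ⌋ - m')| < η := by
    rw [abs_lt]
    constructor <;> nlinarith
  linarith

/-! ### Counting words -/

open Classical in
/-- The words of length `n` of `X` in base `a`, encoded as the integers `⌊a ^ n * y⌋` for
`y ∈ X`. -/
noncomputable def words (a : ℕ) (X : Set ℝ) (n : ℕ) : Finset ℤ :=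
  (Finset.Icc 0 ((a : ℤ) ^ n)).filter fun w => ∃ y ∈ X, ⌊(a : ℝ) ^ n * y⌋ = w

lemma mem_words {a : ℕ} {X : Set ℝ} (hXsub : X ⊆ Set.Icc 0 1) {n : ℕ} {w : ℤ} :
    w ∈ words a X n ↔ ∃ y ∈ X, ⌊(a : ℝ) ^ n * y⌋ = w := by
  classical
  simp only [words, Finset.mem_filter, Finset.mem_Icc, and_iff_right_iff_imp]
  rintro ⟨y, hy, rfl⟩
  obtain ⟨h0, h1⟩ := hXsub hy
  refine ⟨Int.floor_nonneg.2 (by positivity), ?_⟩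
  have h2 : ((⌊(a : ℝ) ^ n * y⌋ : ℤ) : ℝ) ≤ (((a : ℤ) ^ n : ℤ) : ℝ) := by
    push_cast
    exact (Int.floor_le _).trans (mul_le_of_le_one_right (by positivity) h1)
  exact_mod_cast h2

lemma floor_shift {a : ℕ} (ha : 2 ≤ a) (n L : ℕ) (y : ℝ) :
    ⌊(a : ℝ) ^ (n + L) * y⌋ / ((a ^ L : ℕ) : ℤ) = ⌊(a : ℝ) ^ n * y⌋ := by
  have ha0 : (0 : ℝ) < a := by positivity
  rw [← Int.floor_div_natCast]
  congr 1
  push_cast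
  field_simp
  ring

lemma words_growth {a : ℕ} (ha : 2 ≤ a) {X : Set ℝ} (hXsub : X ⊆ Set.Icc 0 1)
    {n₀ L K : ℕ} (h : ∀ n ≥ n₀, ∀ v : ℤ,
      ((words a X (n + L)).filter fun w => w / ((a ^ L : ℕ) : ℤ) = v).card ≤ K) (j : ℕ) :
    (words a X (n₀ + j * L)).card ≤ K ^ j * (words a X n₀).card := by
  induction j with
  | zero => simp
  | succ j ih =>
    have h1 := Finset.card_le_mul_card_image_of_maps_to
      (s := words a X (n₀ + j * L + L)) (t := words a X (n₀ + j * L))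
      (f := fun w => w / ((a ^ L : ℕ) : ℤ)) (by
        intro w hw
        obtain ⟨y, hy, rfl⟩ := (mem_words hXsub).1 hw
        exact (mem_words hXsub).2 ⟨y, hy, (floor_shift ha _ _ _).symm⟩) K
      (fun v _ => h _ (by omega) v)
    calc (words a X (n₀ + (j + 1) * L)).card = (words a X (n₀ + j * L + L)).card := by
          congr 2; ring
      _ ≤ K * (words a X (n₀ + j * L)).card := h1
      _ ≤ K * (K ^ j * (words a X n₀).card) := Nat.mul_le_mul_left _ ih
      _ = K ^ (j + 1) * (words a X n₀).card := by ring

/-- If no micro-configuration has `K` distinct points, then a long word has at most `2 * K`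
extensions by `L` letters. -/
lemma words_bound {a : ℕ} (ha : 2 ≤ a) {X : Set ℝ} (hXc : IsCompact X) (hXinf : X.Infinite)
    (hXsub : X ⊆ Set.Icc 0 1)
    (hXinv : Set.MapsTo (Ta a) X X) (hXmin : ∀ x ∈ X, IsTransitivePoint a X x)
    {K : ℕ} (hK : 0 < K) (hno : ∀ d ∈ MSet a X (Fin K), ¬ Function.Injective d) (L : ℕ) :
    ∃ n₀, ∀ n ≥ n₀, ∀ v : ℤ,
      ((words a X (n + L)).filter fun w => w / ((a ^ L : ℕ) : ℤ) = v).card ≤ 2 * K := by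
  have ha0 : (0 : ℝ) < a := by positivity
  by_contra! hcon
  have : Nonempty (Fin K) := ⟨⟨0, hK⟩⟩
  obtain ⟨d, hd, hinj⟩ := exists_config ha hXc hXinf hXinv hXmin (Fin K)
    (c := ((a : ℝ) ^ L)⁻¹) (by positivity) (by
      intro n₀
      obtain ⟨n, hn, v, hv⟩ := hcon n₀
      obtain ⟨s, hs, hcard⟩ := Finset.exists_subset_card_eq hv.le
      set g := s.orderEmbOfFin hcard with hg
      have hgs : ∀ i : Fin K, ∃ y ∈ X, ⌊(a : ℝ) ^ (n + L) * y⌋ = g ⟨2 * i, by omega⟩ ∧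
          ⌊(a : ℝ) ^ n * y⌋ = v := by
        intro i
        have h1 := hs (s.orderEmbOfFin_mem hcard ⟨2 * i, by omega⟩)
        rw [Finset.mem_filter, mem_words hXsub] at h1
        obtain ⟨⟨y, hy, hyw⟩, hv'⟩ := h1
        refine ⟨y, hy, hyw, ?_⟩
        rw [← floor_shift ha n L, hyw, hv']
      choose y hyX hyw hyv using hgs
      have habs : ∀ i j, (a : ℝ) ^ n * |y i - y j| = |(a : ℝ) ^ n * y i - a ^ n * y j| := by
        intro i j
        rw [← mul_sub, abs_mul, abs_of_pos (a := (a : ℝ) ^ n) (by positivity)]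
      -- only every second word is used, so distinct points are a full mesh apart
      have hlt : ∀ i j, i < j → ((a : ℝ) ^ L)⁻¹ ≤ (a : ℝ) ^ n * |y i - y j| := by
        intro i j hij
        have hij' : (i : ℕ) < j := hij
        have g1 : g ⟨2 * i, by omega⟩ < g ⟨2 * i + 1, by omega⟩ :=
          g.strictMono (by simp [Fin.lt_def])
        have g2 : g ⟨2 * i + 1, by omega⟩ < g ⟨2 * j, by omega⟩ :=
          g.strictMono (by simp only [Fin.lt_def]; omega)
        have g3 : ⌊(a : ℝ) ^ (n + L) * y i⌋ + 2 ≤ ⌊(a : ℝ) ^ (n + L) * y j⌋ := by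
          rw [hyw, hyw]; omega
        have g4 : ((⌊(a : ℝ) ^ (n + L) * y i⌋ : ℤ) : ℝ) + 2 ≤
            ((⌊(a : ℝ) ^ (n + L) * y j⌋ : ℤ) : ℝ) := by exact_mod_cast g3
        have g5 := Int.lt_floor_add_one ((a : ℝ) ^ (n + L) * y i)
        have g6 := Int.floor_le ((a : ℝ) ^ (n + L) * y j)
        rw [inv_le_iff_one_le_mul₀ (by positivity)]
        have g7 : y j - y i ≤ |y i - y j| := by rw [abs_sub_comm]; exact le_abs_self _
        calc (1 : ℝ) ≤ (a : ℝ) ^ (n + L) * (y j - y i) := by rw [mul_sub]; linarith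
          _ ≤ (a : ℝ) ^ (n + L) * |y i - y j| := by gcongr
          _ = _ := by ring
      refine ⟨n, hn, y, hyX, fun i j => ?_, fun i j hij => ?_⟩
      · rw [habs]
        have h1 := Int.floor_eq_iff.1 (hyv i)
        have h2 := Int.floor_eq_iff.1 (hyv j)
        rw [abs_le]; constructor <;> linarith
      · rcases lt_or_gt_of_ne hij with h | h
        · exact hlt i j h
        · rw [abs_sub_comm]; exact hlt j i h)
  exact hno d hd hinj

/-- If all positive reals are, up to `ε`, differences of points of `X` modulo `1`, then every residue
modulo `a ^ n` is a difference of two words of length `n`, up to an error in `{-1, 0, 1}`. -/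
lemma words_lower {a : ℕ} (ha : 2 ≤ a) {X : Set ℝ} (hXsub : X ⊆ Set.Icc 0 1)
    (hdiff : ∀ s > 0, ∀ ε > 0, ∃ z ∈ X, ∃ z' ∈ X, ∃ m : ℤ, |s - (z' - z) - m| < ε) (n : ℕ) :
    a ^ n ≤ 3 * (words a X n).card ^ 2 := by
  have ha0 : (0 : ℝ) < a := by positivity
  set W := words a X n with hW
  set E : Finset ℤ := {-1, 0, 1} with hE
  have hsub : Finset.Ico (0 : ℤ) ((a : ℤ) ^ n) ⊆
      ((W ×ˢ W) ×ˢ E).image fun p => (p.1.2 - p.1.1 + p.2) % (a : ℤ) ^ n := by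
    intro j hj
    rw [Finset.mem_Ico] at hj
    have hA : (0 : ℝ) < (a : ℝ) ^ n := by positivity
    have hj0 : (0 : ℝ) ≤ j := by exact_mod_cast hj.1
    obtain ⟨z, hz, z', hz', m, hm⟩ := hdiff ((j + (a : ℝ) ^ n) / (a : ℝ) ^ n) (by positivity)
      (((a : ℝ) ^ n)⁻¹) (by positivity)
    set w := ⌊(a : ℝ) ^ n * z⌋ with hw
    set w' := ⌊(a : ℝ) ^ n * z'⌋ with hw'
    have h1 : |(j : ℝ) + a ^ n - (a ^ n * z' - a ^ n * z) - a ^ n * m| < 1 := by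
      have : (j : ℝ) + a ^ n - (a ^ n * z' - a ^ n * z) - a ^ n * m =
          ((j + (a : ℝ) ^ n) / (a : ℝ) ^ n - (z' - z) - m) * a ^ n := by
        field_simp
      rw [this, abs_mul, abs_of_pos hA]
      rwa [← lt_div_iff₀ hA, one_div]
    have hw1 := Int.floor_le ((a : ℝ) ^ n * z)
    have hw2 := Int.lt_floor_add_one ((a : ℝ) ^ n * z)
    have hw1' := Int.floor_le ((a : ℝ) ^ n * z')
    have hw2' := Int.lt_floor_add_one ((a : ℝ) ^ n * z')
    rw [← hw] at hw1 hw2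
    rw [← hw'] at hw1' hw2'
    rw [abs_lt] at h1
    obtain ⟨e, he⟩ : ∃ e : ℤ, e = j + (a : ℤ) ^ n - (w' - w) - (a : ℤ) ^ n * m := ⟨_, rfl⟩
    have heR : (e : ℝ) = j + (a : ℝ) ^ n - (w' - w) - (a : ℝ) ^ n * m := by
      rw [he]; push_cast; ring
    have e1 : (-2 : ℝ) < e := by rw [heR]; linarith
    have e2 : (e : ℝ) < 2 := by rw [heR]; linarith
    have e1' : -2 < e := by exact_mod_cast e1
    have e2' : e < 2 := by exact_mod_cast e2
    rw [Finset.mem_image]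
    refine ⟨((w, w'), e), ?_, ?_⟩
    · simp only [Finset.mem_product]
      refine ⟨⟨(mem_words hXsub).2 ⟨z, hz, rfl⟩, (mem_words hXsub).2 ⟨z', hz', rfl⟩⟩, ?_⟩
      simp only [hE, Finset.mem_insert, Finset.mem_singleton]
      omega
    · have : w' - w + e = j + (a : ℤ) ^ n * (1 - m) := by rw [he]; ring
      simp only [this]
      rw [Int.add_mul_emod_self_left, Int.emod_eq_of_lt hj.1 hj.2]
  have hc := (Finset.card_le_card hsub).trans Finset.card_image_le
  rw [Int.card_Ico, Finset.card_product, Finset.card_product] at hc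
  have hE3 : E.card = 3 := by rw [hE]; rfl
  rw [hE3, sub_zero] at hc
  have h2 : ((a : ℤ) ^ n).toNat = a ^ n := by
    rw [← Nat.cast_pow, Int.toNat_natCast]
  rw [h2] at hc
  linarith

/-! ### Rigidity of scales, and the conclusion -/

/-- Otherwise dilating a pair shows `X - X` to be dense in the circle, so `X` has at least about
`a ^ (n / 2)` words of length `n`, while the bound on the size of configurations makes the number
of words grow subexponentially. -/
lemma exists_stab_ne_univ {a : ℕ} (ha : 2 ≤ a) {X : Set ℝ} (hXsub : X ⊆ Set.Icc 0 1)
    (hXcl : IsClosed X) (hXinf : X.Infinite)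
    (hXinv : Set.MapsTo (Ta a) X X) (hXmin : ∀ x ∈ X, IsTransitivePoint a X x) :
    ∃ k : ℕ, Stab a X (Fin k) ≠ univ := by
  by_contra! hall
  have hXc : IsCompact X := isCompact_Icc.of_isClosed_subset hXcl hXsub
  have h0 := zero_notMem hXinf hXmin
  have h1 : (1 : ℝ) ∉ X := fun h => h0 (by simpa [Ta] using hXinv h)
  obtain ⟨x, hx⟩ := hXinf.nonempty
  obtain ⟨η, hη, hgap⟩ := gap hXsub hXcl h0 h1
  obtain ⟨K, hK, hno⟩ := bounded_config ha ⟨x, hx⟩ hXinv hη hgap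
  obtain ⟨n₀, hn₀⟩ := words_bound ha hXc hXinf hXsub hXinv hXmin hK (hno (hall K))
    (2 * (2 * K) ^ 2)
  have hgrow := words_growth ha hXsub hn₀
  obtain ⟨d, hd, hinj⟩ := exists_pair_config ha hXc hXinf hXinv hXmin
  have hd01 : d 0 - d 1 ≠ 0 := sub_ne_zero.2 (hinj.ne (by decide))
  have hlow := words_lower ha hXsub (by
    intro s hs ε hε
    have habs : 0 < |d 0 - d 1| := abs_pos.2 hd01
    obtain ⟨t, ht⟩ := micro_realize hXinv
      (mul_mem_mset ha (hall 2) hd (div_pos hs habs) x hx) (half_pos hε)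
    obtain ⟨z, hz, m, hm⟩ := ht 0
    obtain ⟨z', hz', m', hm'⟩ := ht 1
    have hs' : s / |d 0 - d 1| * |d 0 - d 1| = s := by field_simp
    rw [abs_lt] at hm hm'
    rcases abs_cases (d 0 - d 1) with ⟨hc, -⟩ | ⟨hc, -⟩
    · rw [show s / |d 0 - d 1| * |d 0 - d 1| =
        s / |d 0 - d 1| * d 0 - s / |d 0 - d 1| * d 1 by nth_rewrite 2 [hc]; ring] at hs'
      refine ⟨z', hz', z, hz, m - m', ?_⟩
      push_cast
      rw [abs_lt]
      constructor <;> linarith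
    · rw [show s / |d 0 - d 1| * |d 0 - d 1| =
        s / |d 0 - d 1| * d 1 - s / |d 0 - d 1| * d 0 by nth_rewrite 2 [hc]; ring] at hs'
      refine ⟨z, hz, z', hz', m' - m, ?_⟩
      push_cast
      rw [abs_lt]
      constructor <;> linarith)
  -- the upper and lower bounds on the number of words are incompatible as `j → ∞`
  set Q := (2 * K) ^ 2 with hQ
  have hQpos : 0 < Q := by positivity
  set c := (words a X n₀).card
  have key : ∀ j : ℕ, 2 ^ j ≤ 3 * c ^ 2 := by
    intro j
    have e1 : (2 * Q) ^ j ≤ a ^ (n₀ + j * (2 * Q)) := by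
      calc (2 * Q) ^ j ≤ (2 ^ (2 * Q)) ^ j := Nat.pow_le_pow_left Nat.lt_two_pow_self.le j
        _ = 2 ^ (j * (2 * Q)) := by rw [← pow_mul, mul_comm]
        _ ≤ 2 ^ (n₀ + j * (2 * Q)) := Nat.pow_le_pow_right (by norm_num) (by omega)
        _ ≤ a ^ (n₀ + j * (2 * Q)) := Nat.pow_le_pow_left ha _
    have e2 := hlow (n₀ + j * (2 * Q))
    have e3 := Nat.pow_le_pow_left (hgrow j) 2
    have e4 : (2 * Q) ^ j ≤ 3 * ((2 * K) ^ j * c) ^ 2 :=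
      e1.trans (e2.trans (Nat.mul_le_mul_left 3 e3))
    have e5 : 3 * ((2 * K) ^ j * c) ^ 2 = (3 * c ^ 2) * Q ^ j := by
      rw [hQ]
      generalize 2 * K = T
      ring
    rw [e5, mul_pow] at e4
    exact Nat.le_of_mul_le_mul_right e4 (by positivity)
  have := key (3 * c ^ 2)
  exact absurd Nat.lt_two_pow_self (not_lt.2 this)

/-- **Theorem 1.2, real-analytic case.** If `X ⊆ [0,1]` is an infinite closed minimal
`T_a`-invariant set and `f : ℝ → ℝ` is a real-analytic embedding with `f(X) ⊆ X`, then `f` is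
affine, `f(x) = r x + t` with `log_a |r| ∈ ℚ`. -/
theorem analytic_embedding_minimal_is_affine
    (a : ℕ) (ha : 2 ≤ a) (X : Set ℝ) (hXsub : X ⊆ Set.Icc 0 1)
    (hXcl : IsClosed X) (hXinf : X.Infinite)
    (hXinv : Set.MapsTo (Ta a) X X)
    (hXmin : ∀ x ∈ X, IsTransitivePoint a X x)
    (f : ℝ → ℝ) (hf1 : ∀ x : ℝ, AnalyticAt ℝ f x) (hf2 : ∀ x, deriv f x ≠ 0)
    (hf3 : Topology.IsEmbedding f)
    (himg : f '' X ⊆ X) :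
    ∃ r t : ℝ, (∀ x, f x = r * x + t) ∧ ∃ q : ℚ, Real.logb a |r| = q := by
  have ha1 : (1 : ℝ) < a := by exact_mod_cast (by omega : 1 < a)
  have hXc : IsCompact X := isCompact_Icc.of_isClosed_subset hXcl hXsub
  have hstrict : ∀ x, HasStrictDerivAt f (deriv f x) x := fun x => (hf1 x).hasStrictDerivAt
  obtain ⟨k, hk⟩ := exists_stab_ne_univ ha hXsub hXcl hXinf hXinv hXmin
  obtain ⟨m, hm0, hm⟩ := (stab_dichotomy ha X (Fin k)).resolve_left hk
  have hlog : ∀ x ∈ X, ∃ j : ℤ, 2 * Real.logb a |deriv f x| * m = j := fun x hx =>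
    hm _ (log_deriv_mem_stab ha hXinf hXinv hXmin himg (Fin k) hstrict hx (hf2 x))
  obtain ⟨x, hx, hacc⟩ := hXinf.exists_accPt_of_subset_isCompact hXc subset_rfl
  have hda : AnalyticOnNhd ℝ (deriv f) univ := fun y _ => (hf1 y).deriv
  have hdc : ContinuousAt (deriv f) x := (hda x trivial).continuousAt
  have hlc : ContinuousAt (fun y => 2 * Real.logb a |deriv f y| * m) x := by
    refine (continuousAt_const.mul ?_).mul continuousAt_const
    exact hdc.abs.logb (abs_pos.2 (hf2 x)).ne'
  -- near `x` the derivative keeps its sign, and `2 m log_a |f'|` is an integer on `X`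
  have hev : ∀ᶠ y in nhds x, y ∈ X → deriv f y = deriv f x := by
    have hsign : ∀ᶠ y in nhds x, 0 < deriv f y * deriv f x :=
      (hdc.mul continuousAt_const).eventually_const_lt (mul_self_pos.2 (hf2 x))
    filter_upwards [hsign, Metric.continuousAt_iff'.1 hlc 1 one_pos] with y hy hy1 hyX
    obtain ⟨j, hj⟩ := hlog y hyX
    obtain ⟨j', hj'⟩ := hlog x hx
    rw [hj, hj', Real.dist_eq, ← Int.cast_sub, ← Int.cast_abs] at hy1
    have hjj : j = j' := by
      have : |j - j'| < 1 := by exact_mod_cast hy1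
      rw [Int.abs_lt_one_iff] at this
      omega
    have hm0' : (m : ℝ) ≠ 0 := by exact_mod_cast hm0
    have hl : Real.logb a |deriv f y| = Real.logb a |deriv f x| := by
      have h1 : 2 * Real.logb a |deriv f y| * m = 2 * Real.logb a |deriv f x| * m := by
        rw [hj, hj', hjj]
      have h2 := mul_right_cancel₀ hm0' h1
      linarith
    have habs : |deriv f y| = |deriv f x| :=
      Real.logb_injOn_pos ha1 (abs_pos.2 (hf2 y)) (abs_pos.2 (hf2 x)) hl
    rcases abs_eq_abs.1 habs with h | h
    · exact h
    · rw [h] at hy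
      nlinarith [mul_self_nonneg (deriv f x)]
  have hfreq : ∃ᶠ y in nhdsWithin x {x}ᶜ, deriv f y = deriv f x := by
    have h1 : ∃ᶠ y in nhdsWithin x {x}ᶜ, y ∈ X := by
      rw [accPt_iff_frequently_nhdsNE] at hacc
      exact hacc
    exact (h1.and_eventually (hev.filter_mono nhdsWithin_le_nhds)).mono fun y hy => hy.2 hy.1
  have hconst : deriv f = fun _ => deriv f x :=
    hda.eq_of_frequently_eq analyticOnNhd_const hfreq
  refine ⟨deriv f x, f 0, fun y => ?_, ?_⟩
  · have hg : ∀ z, HasDerivAt (fun z => f z - deriv f x * z) 0 z := by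
      intro z
      have h1 : HasDerivAt (fun z => f z - deriv f x * z) (deriv f z - deriv f x * 1) z :=
        (hstrict z).hasDerivAt.sub ((hasDerivAt_id z).const_mul (deriv f x))
      have h2 : deriv f z = deriv f x := congrFun hconst z
      simpa [h2] using h1
    have := is_const_of_deriv_eq_zero (fun z => (hg z).differentiableAt)
      (fun z => (hg z).deriv) y 0
    simp only [mul_zero, sub_zero] at this
    linarith
  · obtain ⟨j, hj⟩ := hlog x hx
    refine ⟨j / (2 * m), ?_⟩
    have hm0' : (m : ℝ) ≠ 0 := by exact_mod_cast hm0
    push_cast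
    rw [_root_.eq_div_iff (by positivity)]
    linarith
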